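/- Let n be an odd positive integer. For 1 ≤ i, j ≤ n−1, let θ(i,j) be the unique angle in (0,π) satisfying cos(θ(i,j))·H_n(t_{n−1,i}) + sin(θ(i,j))·H_n(t_{n−1,j}) = 0, and set θ_c := min{ θ(i,j) : 1 ≤ i, j ≤ n−1 }. Then for every θ with 0 < θ < θ_c, the nodal set N(Φ^θ_n) is nonempty and connected, the gradient of Φ^θ_n vanishes nowhere on N(Φ^θ_n), and ℝ² \ N(Φ^θ_n) has exactly two connected components. -/

import Mathlib

/-- The physicist's Hermite polynomials: `H 0 = 1`, `H 1 = 2X`,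
`H (n+2) = 2X · H (n+1) - 2(n+1) · H n`. -/
noncomputable def H : ℕ → Polynomial ℝ
  | 0 => 1
  | 1 => Polynomial.C 2 * Polynomial.X
  | n + 2 => Polynomial.C 2 * Polynomial.X * H (n + 1) - Polynomial.C (2 * (n + 1) : ℝ) * H n

/-- The eigenfunction `Φ^θ_n(x,y) = (cos θ · H_n(x) + sin θ · H_n(y)) e^{-(x²+y²)/2}`. -/
noncomputable def Phi (n : ℕ) (θ : ℝ) : ℝ × ℝ → ℝ := fun p =>
  (Real.cos θ * (H n).eval p.1 + Real.sin θ * (H n).eval p.2) *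
    Real.exp (-(p.1 ^ 2 + p.2 ^ 2) / 2)

/-- The nodal set of `Φ^θ_n`. -/
noncomputable def nodalSet (n : ℕ) (θ : ℝ) : Set (ℝ × ℝ) := {p | Phi n θ p = 0}

/-- The number of nodal domains: the number of connected components of the
complement of the nodal set. -/
noncomputable def numNodalDomains (n : ℕ) (θ : ℝ) : ℕ :=
  {C : Set (ℝ × ℝ) | ∃ p, Phi n θ p ≠ 0 ∧
    C = connectedComponentIn {q : ℝ × ℝ | Phi n θ q ≠ 0} p}.ncard

open Polynomial in
theorem H_succ2 (n : ℕ) : H (n+2) = C 2 * X * H (n + 1) - C (2 * (n + 1) : ℝ) * H n := by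
  rw [H]

open Polynomial in
theorem H_deriv (n : ℕ) : derivative (H (n+1)) = C (2 * (n + 1) : ℝ) * H n ∧
    derivative (H (n+2)) = C (2 * (n + 2) : ℝ) * H (n+1) := by
  induction n with
  | zero =>
    constructor
    · simp [H]
    · simp [H]
      rw [← sub_eq_zero]
      simp only [show (C 2 : ℝ[X]) = 2 from rfl]
      ring
  | succ n ih =>
    refine ⟨by rw [ih.2]; push_cast; congr 2; ring, ?_⟩
    rw [show n + 1 + 2 = (n+1) + 2 from rfl, H_succ2 (n+1)]
    simp only [derivative_sub, derivative_mul, derivative_C, derivative_X]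
    rw [show n + 1 + 1 = n + 2 from rfl, ih.1, ih.2, H_succ2 n]
    simp only [C_mul, C_add, Nat.cast_add, Nat.cast_one, C_1, show (C 2 : ℝ[X]) = 2 from rfl]
    ring

theorem H_neg (n : ℕ) (x : ℝ) : (H n).eval (-x) = (-1)^n * (H n).eval x ∧
    (H (n+1)).eval (-x) = (-1)^(n+1) * (H (n+1)).eval x := by
  induction n with
  | zero => simp [H]
  | succ n ih =>
    refine ⟨ih.2, ?_⟩
    rw [show n + 1 + 1 = n + 2 from rfl, H_succ2]
    simp only [Polynomial.eval_sub, Polynomial.eval_mul, Polynomial.eval_C, Polynomial.eval_X, ih.1, ih.2]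
    ring

theorem H_deg (n : ℕ) : ((H n).natDegree ≤ n ∧ (H n).coeff n = 2^n) ∧
    ((H (n+1)).natDegree ≤ n+1 ∧ (H (n+1)).coeff (n+1) = 2^(n+1)) := by
  induction n with
  | zero =>
    refine ⟨by simp [H], ?_, by simp [H]⟩
    simp only [H]
    exact (Polynomial.natDegree_C_mul_le _ _).trans (by simp)
  | succ n ih =>
    refine ⟨ih.2, ?_, ?_⟩
    · rw [show n + 1 + 1 = n + 2 from rfl, H_succ2]
      refine Polynomial.natDegree_sub_le_of_le (m := n + 2) (n := n + 2) ?_ ?_ |>.trans (by simp)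
      · rw [mul_assoc]
        refine (Polynomial.natDegree_C_mul_le _ _).trans ?_
        refine Polynomial.natDegree_mul_le.trans ?_
        have := ih.2.1
        simp; omega
      · refine (Polynomial.natDegree_C_mul_le _ _).trans ?_
        have := ih.1.1
        omega
    · rw [show n + 1 + 1 = n + 2 from rfl, H_succ2, mul_assoc, Polynomial.coeff_sub,
        Polynomial.coeff_C_mul, Polynomial.coeff_C_mul, show n + 2 = n + 1 + 1 from rfl, Polynomial.coeff_X_mul,
        Polynomial.coeff_eq_zero_of_natDegree_lt (lt_of_le_of_lt ih.1.1 (by omega)), ih.2.2]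
      ring

theorem H_tendsto (n : ℕ) (hn : 0 < n) : Filter.Tendsto (fun x => (H n).eval x) Filter.atTop Filter.atTop := by
  have h := (H_deg n).1
  have hc : (H n).coeff n ≠ 0 := by rw [h.2]; positivity
  have hd : (H n).natDegree = n := le_antisymm h.1 (Polynomial.le_natDegree_of_ne_zero hc)
  apply Polynomial.tendsto_atTop_of_leadingCoeff_nonneg
  · exact Polynomial.natDegree_pos_iff_degree_pos.1 (by omega)
  · rw [Polynomial.leadingCoeff, hd, h.2]; positivity

theorem H_common (n : ℕ) (x : ℝ) (h1 : (H n).eval x = 0) (h2 : (H (n+1)).eval x = 0) : False := by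
  induction n with
  | zero => simp [H] at h1
  | succ n ih =>
    refine ih ?_ h1
    rw [show n + 1 + 1 = n + 2 from rfl, H_succ2] at h2
    simp only [Polynomial.eval_sub, Polynomial.eval_mul, Polynomial.eval_C, Polynomial.eval_X, h1] at h2
    have : (2 * ((n:ℝ)+1)) ≠ 0 := by positivity
    have h3 : (2 * ((n:ℝ)+1)) * (H n).eval x = 0 := by linarith
    exact (mul_eq_zero.1 h3).resolve_left this

section Aux
open Set Filter Topology

/-- downward step forces critical values on both sides -/
theorem crit_below {g : ℝ → ℝ} (hg : Continuous g) (ht : Tendsto g atTop atTop)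
    {y y' : ℝ} (hyy : y ≤ y') (hlt : g y' < g y) : ∃ w, deriv g w = 0 ∧ g w ≤ g y' := by
  obtain ⟨B, hB1, hB2⟩ := ((ht.eventually_ge_atTop (g y)).and (eventually_ge_atTop y')).exists
  obtain ⟨w, hw, hmin⟩ := isCompact_Icc.exists_isMinOn (⟨y, left_mem_Icc.2 (hyy.trans hB2)⟩ : (Icc y B).Nonempty) hg.continuousOn
  have h1 : g w ≤ g y' := hmin ⟨hyy, hB2⟩
  refine ⟨w, ?_, h1⟩
  have hwy : y < w := lt_of_le_of_ne hw.1 (by rintro rfl; linarith)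
  have hwB : w < B := lt_of_le_of_ne hw.2 (by rintro rfl; linarith)
  exact (hmin.isLocalMin (Icc_mem_nhds hwy hwB)).deriv_eq_zero

theorem crit_above {g : ℝ → ℝ} (hg : Continuous g) (ht : Tendsto g atBot atBot)
    {y y' : ℝ} (hyy : y ≤ y') (hlt : g y' < g y) : ∃ w, deriv g w = 0 ∧ g y ≤ g w := by
  obtain ⟨B, hB1, hB2⟩ := ((ht.eventually_le_atBot (g y')).and (eventually_le_atBot y)).exists
  obtain ⟨w, hw, hmax⟩ := isCompact_Icc.exists_isMaxOn (⟨y', right_mem_Icc.2 (hB2.trans hyy)⟩ : (Icc B y').Nonempty) hg.continuousOn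
  have h1 : g y ≤ g w := hmax ⟨hB2, hyy⟩
  refine ⟨w, ?_, h1⟩
  have hwy : w < y' := lt_of_le_of_ne hw.2 (by rintro rfl; linarith)
  have hwB : B < w := lt_of_le_of_ne hw.1 (by rintro rfl; linarith)
  exact (hmax.isLocalMax (Icc_mem_nhds hwB hwy)).deriv_eq_zero

theorem climb {f : ℝ → ℝ} {m : ℝ} (hf : Continuous f) (ht : Tendsto f atTop atTop)
    (hb : Tendsto f atBot atBot) (hmax : ∀ t, IsLocalMax f t → m ≤ f t)
    {c x : ℝ} (hx : c < f x) : ∃ x', (∀ u ∈ uIcc x x', c < f u) ∧ m ≤ f x' := by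
  by_cases hall : ∀ u, x ≤ u → c < f u
  · obtain ⟨B, hB1, hB2⟩ := ((ht.eventually_ge_atTop m).and (eventually_ge_atTop x)).exists
    refine ⟨B, fun u hu => ?_, hB1⟩
    rw [uIcc_of_le hB2] at hu
    exact hall u hu.1
  push Not at hall
  obtain ⟨b0, hb0, hb0'⟩ := hall
  obtain ⟨a0, ha0', ha0⟩ := ((hb.eventually_le_atBot c).and (eventually_le_atBot x)).exists
  have hcl : IsClosed {u | f u ≤ c} := isClosed_le hf continuous_const
  have hbm := (hcl.inter (isClosed_Ici (a := x))).csInf_mem ⟨b0, hb0', hb0⟩ ⟨x, fun u hu => hu.2⟩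
  have ham := (hcl.inter (isClosed_Iic (a := x))).csSup_mem ⟨a0, ha0', ha0⟩ ⟨x, fun u hu => hu.2⟩
  have hbl : ∀ u, x ≤ u → f u ≤ c → sInf ({u | f u ≤ c} ∩ Ici x) ≤ u :=
    fun u h1 h2 => csInf_le ⟨x, fun u hu => hu.2⟩ ⟨h2, h1⟩
  have hal : ∀ u, u ≤ x → f u ≤ c → u ≤ sSup ({u | f u ≤ c} ∩ Iic x) :=
    fun u h1 h2 => le_csSup ⟨x, fun u hu => hu.2⟩ ⟨h2, h1⟩
  set b := sInf ({u | f u ≤ c} ∩ Ici x)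
  set a := sSup ({u | f u ≤ c} ∩ Iic x)
  obtain ⟨hb1, hb2⟩ := hbm
  obtain ⟨ha1, ha2⟩ := ham
  simp only [mem_ofPred_eq, mem_Ici, mem_Iic] at hb1 hb2 ha1 ha2
  have hpos : ∀ u ∈ Ioo a b, c < f u := by
    intro u hu
    by_contra h
    push Not at h
    rcases le_total u x with h' | h'
    · exact absurd (hal u h' h) (not_le.2 hu.1)
    · exact absurd (hbl u h' h) (not_le.2 hu.2)
  obtain ⟨t, htm, hmx⟩ := isCompact_Icc.exists_isMaxOn (⟨x, ha2, hb2⟩ : (Icc a b).Nonempty) hf.continuousOn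
  have h1 : f x ≤ f t := hmx ⟨ha2, hb2⟩
  have hat : a < t := lt_of_le_of_ne htm.1 (by intro h; rw [← h] at h1; linarith)
  have htb : t < b := lt_of_le_of_ne htm.2 (by intro h; rw [h] at h1; linarith)
  have hax : a < x := lt_of_le_of_ne ha2 (by intro h; rw [h] at ha1; linarith)
  have hxb : x < b := lt_of_le_of_ne hb2 (by intro h; rw [← h] at hb1; linarith)
  refine ⟨t, fun u hu => hpos u ?_, hmax t (hmx.isLocalMax (Icc_mem_nhds hat htb))⟩
  exact ⟨lt_of_lt_of_le (lt_min hax hat) hu.1, lt_of_le_of_lt hu.2 (max_lt hxb htb)⟩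

theorem joined_h {S : Set (ℝ × ℝ)} {x x' y : ℝ} (h : ∀ u ∈ uIcc x x', (u, y) ∈ S) :
    JoinedIn S (x, y) (x', y) := by
  apply JoinedIn.of_segment_subset
  rw [← Prod.image_mk_segment_left, segment_eq_uIcc]
  rintro _ ⟨u, hu, rfl⟩
  exact h u hu

theorem joined_v {S : Set (ℝ × ℝ)} {x y y' : ℝ} (h : ∀ u ∈ uIcc y y', (x, u) ∈ S) :
    JoinedIn S (x, y) (x, y') := by
  apply JoinedIn.of_segment_subset
  rw [← Prod.image_mk_segment_right, segment_eq_uIcc]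
  rintro _ ⟨u, hu, rfl⟩
  exact h u hu

theorem pos_conn {f g : ℝ → ℝ} {m : ℝ} (hf : Continuous f) (ht : Tendsto f atTop atTop)
    (hb : Tendsto f atBot atBot) (hmax : ∀ t, IsLocalMax f t → m ≤ f t)
    (hg : Continuous g) (hgt : Tendsto g atTop atTop)
    (hgc : ∀ w, deriv g w = 0 → |g w| < m) :
    IsConnected {p : ℝ × ℝ | 0 < f p.1 + g p.2} := by
  apply IsPathConnected.isConnected
  rw [isPathConnected_iff]
  constructor
  · obtain ⟨Y, hY⟩ := (hgt.eventually_gt_atTop (- f 0)).exists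
    exact ⟨(0, Y), by simp only [mem_ofPred_eq]; linarith⟩
  have key : ∀ p : ℝ × ℝ, 0 < f p.1 + g p.2 → ∃ x', ∀ Y, p.2 ≤ Y →
      JoinedIn {p : ℝ × ℝ | 0 < f p.1 + g p.2} p (x', Y) := by
    rintro ⟨x, y⟩ hp
    simp only at hp
    obtain ⟨x', h1, h2⟩ := climb (c := - g y) hf ht hb hmax (x := x) (by linarith)
    refine ⟨x', fun Y hY => ?_⟩
    refine (joined_h (x' := x') fun u hu => ?_).trans (joined_v fun u hu => ?_)
    · have := h1 u hu
      simp only [mem_ofPred_eq]; linarith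
    · rw [uIcc_of_le hY] at hu
      simp only [mem_ofPred_eq]
      by_cases hlt : g u < g y
      · obtain ⟨w, hw, hw'⟩ := crit_below hg hgt hu.1 hlt
        have := (abs_lt.1 (hgc w hw)).1
        linarith
      · have := h1 x' right_mem_uIcc
        linarith
  intro p hp q hq
  obtain ⟨x1, h1⟩ := key p hp
  obtain ⟨x2, h2⟩ := key q hq
  obtain ⟨c, hc⟩ := (isCompact_uIcc (a := x1) (b := x2)).bddBelow_image hf.continuousOn
  obtain ⟨Y, hY, hY1, hY2⟩ := ((hgt.eventually_gt_atTop (- c)).and ((eventually_ge_atTop p.2).and (eventually_ge_atTop q.2))).exists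
  refine ((h1 Y hY1).trans (joined_h fun u hu => ?_)).trans (h2 Y hY2).symm
  have := hc ⟨u, hu, rfl⟩
  simp only [mem_ofPred_eq]; linarith

theorem strip_conn {f g : ℝ → ℝ} {m : ℝ} (hf : Continuous f) 
    (hg : Continuous g) (hgt : Tendsto g atTop atTop) (hgb : Tendsto g atBot atBot)
    (hgc : ∀ w, deriv g w = 0 → |g w| < m) {a b : ℝ} (hab : a < b)
    (hcr : ∀ u ∈ Ioo a b, deriv f u ≠ 0) (ha : m ≤ |f a|) (hb : m ≤ |f b|) :
    IsPreconnected {p : ℝ × ℝ | p.1 ∈ Icc a b ∧ f p.1 + g p.2 = 0} := by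
  have hinj : InjOn f (Icc a b) := by
    have : ∀ u ∈ Icc a b, ∀ v ∈ Icc a b, u < v → f u ≠ f v := by
      intro u hu v hv huv h
      obtain ⟨w, hw, hw'⟩ := exists_deriv_eq_zero huv hf.continuousOn h
      exact hcr w ⟨lt_of_le_of_lt hu.1 hw.1, lt_of_lt_of_le hw.2 hv.2⟩ hw'
    intro u hu v hv h
    rcases lt_trichotomy u v with h' | h' | h'
    · exact absurd h (this u hu v hv h')
    · exact h'
    · exact absurd h.symm (this v hv u hu h')
  -- the image is an interval with endpoints of size at least m
  obtain ⟨lo, hi, hlo, hhi, him⟩ : ∃ lo hi, m ≤ |lo| ∧ m ≤ |hi| ∧ f '' Icc a b = Icc lo hi := by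
    rcases hf.continuousOn.strictMonoOn_of_injOn_Icc' hab.le hinj with h | h
    · refine ⟨f a, f b, ha, hb, ?_⟩
      apply Subset.antisymm
      · rintro _ ⟨u, hu, rfl⟩
        exact ⟨h.monotoneOn (left_mem_Icc.2 hab.le) hu hu.1, h.monotoneOn hu (right_mem_Icc.2 hab.le) hu.2⟩
      · exact intermediate_value_Icc hab.le hf.continuousOn
    · refine ⟨f b, f a, hb, ha, ?_⟩
      apply Subset.antisymm
      · rintro _ ⟨u, hu, rfl⟩
        exact ⟨h.antitoneOn hu (right_mem_Icc.2 hab.le) hu.2, h.antitoneOn (left_mem_Icc.2 hab.le) hu hu.1⟩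
      · exact intermediate_value_Icc' hab.le hf.continuousOn
  have hmono : ∀ y y', y ≤ y' → g y' < g y → -m < g y' ∧ g y < m := by
    intro y y' h1 h2
    obtain ⟨w, hw, hw'⟩ := crit_below hg hgt h1 h2
    obtain ⟨v, hv, hv'⟩ := crit_above hg hgb h1 h2
    have := (abs_lt.1 (hgc w hw)).1
    have := (abs_lt.1 (hgc v hv)).2
    constructor <;> linarith
  have hord : OrdConnected {y | - g y ∈ Icc lo hi} := by
    refine ⟨fun y1 h1 y2 h2 y hy => ?_⟩
    simp only [mem_ofPred_eq, mem_Icc] at *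
    constructor
    · by_contra h
      push Not at h
      have := hmono y y2 hy.2 (by linarith)
      rcases le_abs.1 hlo with h' | h' <;> linarith
    · by_contra h
      push Not at h
      have := hmono y1 y hy.1 (by linarith)
      rcases le_abs.1 hhi with h' | h' <;> linarith
  have hs : IsPreconnected ((fun y => (- g y, y)) '' {y | - g y ∈ Icc lo hi}) :=
    hord.isPreconnected.image _ (by fun_prop)
  let φ : Icc a b → ℝ := fun u => f u
  have hφ : IsClosedEmbedding φ :=
    Continuous.isClosedEmbedding (hf.comp continuous_subtype_val) (fun u v h => Subtype.ext (hinj u.2 v.2 h))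
  have hφ2 : IsClosedEmbedding (Prod.map φ (id : ℝ → ℝ)) := hφ.prodMap .id
  have hpre := hs.preimage_of_isClosedMap hφ2.injective hφ2.isClosedMap (by
    rintro _ ⟨y, hy, rfl⟩
    have hy' : - g y ∈ Icc lo hi := hy
    rw [← him] at hy'
    obtain ⟨u, hu, huy⟩ := hy'
    exact ⟨(⟨u, hu⟩, y), by simp [φ, huy]⟩)
  have := hpre.image (Prod.map Subtype.val id) (by fun_prop)
  convert this using 1
  ext ⟨x, y⟩
  simp only [mem_ofPred_eq, mem_image, mem_preimage, Prod.exists, Prod.map_apply, id, Prod.mk.injEq, φ]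
  constructor
  · rintro ⟨hx, h⟩
    refine ⟨⟨x, hx⟩, y, ⟨y, ?_, by simp; linarith, rfl⟩, rfl, rfl⟩
    rw [← him]
    exact ⟨x, hx, by linarith⟩
  · rintro ⟨u, v, ⟨w, hw, h1, h2⟩, h3, h4⟩
    subst h3 h4 h2
    exact ⟨u.2, by linarith⟩

theorem nodal_conn {f g : ℝ → ℝ} {m : ℝ} (hf : Continuous f) (ht : Tendsto f atTop atTop)
    (hb : Tendsto f atBot atBot) (hfin : {x | deriv f x = 0}.Finite)
    (hfc : ∀ w, deriv f w = 0 → m ≤ |f w|)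
    (hg : Continuous g) (hgt : Tendsto g atTop atTop) (hgb : Tendsto g atBot atBot)
    (hgc : ∀ w, deriv g w = 0 → |g w| < m) :
    IsConnected {p : ℝ × ℝ | f p.1 + g p.2 = 0} := by
  have hne : ∀ x, ∃ y, f x + g y = 0 := by
    intro x
    obtain ⟨y, hy⟩ := hg.surjective hgt hgb (- f x)
    exact ⟨y, by linarith⟩
  let P : ℝ → ℝ → Prop := fun x x' => ∃ S : Set (ℝ × ℝ), S ⊆ {p : ℝ × ℝ | f p.1 + g p.2 = 0} ∧
    IsPreconnected S ∧ (∀ y, f x + g y = 0 → (x, y) ∈ S) ∧ (∀ y, f x' + g y = 0 → (x', y) ∈ S)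
  have hsymm : ∀ x x', P x x' → P x' x := fun x x' ⟨S, h1, h2, h3, h4⟩ => ⟨S, h1, h2, h4, h3⟩
  have htrans : ∀ x x' x'', P x x' → P x' x'' → P x x'' := by
    rintro x x' x'' ⟨S, h1, h2, h3, h4⟩ ⟨T, k1, k2, k3, k4⟩
    obtain ⟨y, hy⟩ := hne x'
    exact ⟨S ∪ T, union_subset h1 k1, h2.union (x', y) (h4 y hy) (k3 y hy) k2,
      fun y hy => Or.inl (h3 y hy), fun y hy => Or.inr (k4 y hy)⟩
  have hloc : ∀ x z, x < z → (∀ u ∈ Ioo x z, deriv f u ≠ 0) → P x z := by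
    intro x z hxz hu
    obtain ⟨A, hA1, hA2⟩ := ((hb.eventually_le_atBot (-m)).and (eventually_le_atBot x)).exists
    obtain ⟨B, hB1, hB2⟩ := ((ht.eventually_ge_atTop m).and (eventually_ge_atTop z)).exists
    obtain ⟨a, ⟨ha1, ha2⟩, ha3⟩ := Set.exists_max_image (insert A {x | deriv f x = 0} ∩ Iic x) id
      ((hfin.insert A).inter_of_left _) ⟨A, by simp, hA2⟩
    obtain ⟨b, ⟨hb1, hb2⟩, hb3⟩ := Set.exists_min_image (insert B {x | deriv f x = 0} ∩ Ici z) id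
      ((hfin.insert B).inter_of_left _) ⟨B, by simp, hB2⟩
    simp only [mem_Iic, mem_Ici, id] at ha2 ha3 hb2 hb3
    have hab : a < b := by linarith
    refine ⟨{p : ℝ × ℝ | p.1 ∈ Icc a b ∧ f p.1 + g p.2 = 0}, fun p hp => hp.2,
      strip_conn hf hg hgt hgb hgc hab ?_ ?_ ?_, fun y hy => ⟨⟨ha2, by simp; linarith⟩, hy⟩,
      fun y hy => ⟨⟨by simp; linarith, hb2⟩, hy⟩⟩
    · intro u huab hu0
      by_cases h1 : u ≤ x
      · exact absurd (ha3 u ⟨Or.inr hu0, h1⟩) (not_le.2 huab.1)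
      by_cases h2 : z ≤ u
      · exact absurd (hb3 u ⟨Or.inr hu0, h2⟩) (not_le.2 huab.2)
      exact hu u ⟨not_le.1 h1, not_le.1 h2⟩ hu0
    · rcases ha1 with rfl | h
      · exact le_abs.2 (Or.inr (by linarith))
      · exact hfc a h
    · rcases hb1 with rfl | h
      · exact le_abs.2 (Or.inl hB1)
      · exact hfc b h
  have hrefl : ∀ x, P x x := by
    intro x
    obtain ⟨z, hz⟩ : ∃ z, P x z := by
      have h : ∀ᶠ z in 𝓝 x, z ∉ {x | deriv f x = 0} \ {x} :=
        (hfin.subset sdiff_subset).isClosed.isOpen_compl.mem_nhds (by simp)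
      obtain ⟨ε, hε, h⟩ := Metric.eventually_nhds_iff.1 h
      refine ⟨x + ε / 2, hloc _ _ (by linarith) fun u hu hu0 => h (y := u) ?_ ⟨hu0, ?_⟩⟩
      · rw [Real.dist_eq, abs_lt]; constructor <;> linarith [hu.1, hu.2]
      · exact hu.1.ne'
    exact htrans _ _ _ hz (hsymm _ _ hz)
  have hP : ∀ x z, P x z := by
    intro x z
    refine isPreconnected_univ.induction₂ P (fun x _ => ?_) (fun a b c _ _ _ => htrans a b c) (fun a b _ _ => hsymm a b) (mem_univ x) (mem_univ z)
    rw [nhdsWithin_univ]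
    have h : ∀ᶠ z in 𝓝 x, z ∉ {x | deriv f x = 0} \ {x} :=
      (hfin.subset sdiff_subset).isClosed.isOpen_compl.mem_nhds (by simp)
    obtain ⟨ε, hε, h⟩ := Metric.eventually_nhds_iff.1 h
    refine Metric.eventually_nhds_iff.2 ⟨ε, hε, fun y hy => ?_⟩
    rw [Real.dist_eq, abs_lt] at hy
    rcases lt_trichotomy x y with hxy | rfl | hxy
    · refine hloc _ _ hxy fun u hu hu0 => h (y := u) ?_ ⟨hu0, hu.1.ne'⟩
      rw [Real.dist_eq, abs_lt]; constructor <;> linarith [hu.1, hu.2, hy.1, hy.2]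
    · exact hrefl _
    · refine hsymm _ _ (hloc _ _ hxy fun u hu hu0 => h (y := u) ?_ ⟨hu0, hu.2.ne⟩)
      rw [Real.dist_eq, abs_lt]; constructor <;> linarith [hu.1, hu.2, hy.1, hy.2]
  refine ⟨?_, isPreconnected_of_forall_pair ?_⟩
  · obtain ⟨y, hy⟩ := hne 0
    exact ⟨(0, y), hy⟩
  · rintro ⟨x, y⟩ h ⟨x', y'⟩ h'
    obtain ⟨S, h1, h2, h3, h4⟩ := hP x x'
    exact ⟨S, h1, h3 y h, h4 y' h', h2⟩

theorem h_deriv1 (j : ℕ) : deriv (fun x => (H (j + 2)).eval x) =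
    fun x => 2 * ((j : ℝ) + 2) * (H (j + 1)).eval x := by
  ext x
  rw [Polynomial.deriv, (H_deriv j).2]; simp

theorem h_locmax (j : ℕ) (t : ℝ) (ht : IsLocalMax (fun x => (H (j + 2)).eval x) t) :
    0 < (H (j + 2)).eval t := by
  have hd := ht.deriv_eq_zero
  have h0 : (H (j + 1)).eval t = 0 := by
    rw [h_deriv1] at hd
    exact (mul_eq_zero.1 hd).resolve_left (by positivity)
  have hdd : deriv (deriv (fun x => (H (j + 2)).eval x)) t =
      - (2 * ((j : ℝ) + 2)) * (H (j + 2)).eval t := by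
    have h1 : (H (j + 2)).eval t = - (2 * ((j : ℝ) + 1)) * (H j).eval t := by
      rw [H_succ2]; simp [h0]
    rw [h1, h_deriv1, deriv_const_mul _ (Polynomial.differentiableAt _), Polynomial.deriv, (H_deriv j).1]
    simp only [Polynomial.eval_mul, Polynomial.eval_C]
    ring
  by_contra hle
  have hlt : (H (j + 2)).eval t < 0 :=
    lt_of_le_of_ne (not_lt.1 hle) (fun h => H_common (j + 1) t h0 h)
  have hpos : deriv (deriv (fun x => (H (j + 2)).eval x)) t > 0 := by
    rw [hdd]
    have : (0 : ℝ) < 2 * ((j : ℝ) + 2) := by positivity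
    nlinarith
  have hmin := isLocalMin_of_deriv_deriv_pos hpos hd (Polynomial.continuous _).continuousAt
  have heq : (fun x => (H (j + 2)).eval x) =ᶠ[𝓝 t] fun _ => (H (j + 2)).eval t := by
    filter_upwards [ht, hmin] with x h1 h2
    exact le_antisymm h1 h2
  have := heq.deriv.deriv_eq
  simp at this
  linarith

theorem core (j : ℕ) (θ : ℝ) (hsin : 0 < Real.sin θ)
    (hodd : ∀ x, (H (j + 2)).eval (-x) = - (H (j + 2)).eval x)
    (hex : ∃ s, (H (j + 1)).eval s = 0)
    (hall : ∀ s t, (H (j + 1)).eval s = 0 → (H (j + 1)).eval t = 0 →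
      Real.sin θ * |(H (j + 2)).eval t| < Real.cos θ * |(H (j + 2)).eval s|) :
    (nodalSet (j + 2) θ).Nonempty ∧
    IsConnected (nodalSet (j + 2) θ) ∧
    (∀ p ∈ nodalSet (j + 2) θ, fderiv ℝ (Phi (j + 2) θ) p ≠ 0) ∧
    numNodalDomains (j + 2) θ = 2 := by
  obtain ⟨s0, hs0⟩ := hex
  have hcos : 0 < Real.cos θ := by
    have h1 := hall s0 s0 hs0 hs0
    have h2 : 0 ≤ Real.sin θ * |(H (j + 2)).eval s0| := by positivity
    exact pos_of_mul_pos_left (h2.trans_lt h1) (abs_nonneg _)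
  let f : ℝ → ℝ := fun x => Real.cos θ * (H (j + 2)).eval x
  let g : ℝ → ℝ := fun x => Real.sin θ * (H (j + 2)).eval x
  have hf : Continuous f := by fun_prop
  have hg : Continuous g := by fun_prop
  have htop := H_tendsto (j + 2) (by omega)
  have hbot : Tendsto (fun x => (H (j + 2)).eval x) atBot atBot := by
    have := tendsto_neg_atTop_atBot.comp (htop.comp tendsto_neg_atBot_atTop)
    refine this.congr fun x => ?_
    simp [hodd]
  have hft : Tendsto f atTop atTop := htop.const_mul_atTop hcos
  have hfb : Tendsto f atBot atBot := hbot.const_mul_atBot hcos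
  have hgt : Tendsto g atTop atTop := htop.const_mul_atTop hsin
  have hgb : Tendsto g atBot atBot := hbot.const_mul_atBot hsin
  have hderiv : ∀ c : ℝ, c ≠ 0 → ∀ x, deriv (fun x => c * (H (j + 2)).eval x) x = 0 ↔
      (H (j + 1)).eval x = 0 := by
    intro c hc x
    rw [deriv_const_mul _ (Polynomial.differentiableAt _), h_deriv1]
    have : (2 * ((j : ℝ) + 2)) ≠ 0 := by positivity
    constructor
    · intro h
      exact (mul_eq_zero.1 ((mul_eq_zero.1 h).resolve_left hc)).resolve_left this
    · intro h
      simp [h]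
  have hdf : ∀ x, deriv f x = 0 ↔ (H (j + 1)).eval x = 0 := hderiv _ hcos.ne'
  have hdg : ∀ x, deriv g x = 0 ↔ (H (j + 1)).eval x = 0 := hderiv _ hsin.ne'
  have hfin0 : {x : ℝ | (H (j + 1)).eval x = 0}.Finite := by
    have hne : H (j + 1) ≠ 0 := by
      intro h
      have := (H_deg (j + 1)).1.2
      rw [h] at this
      rw [Polynomial.coeff_zero] at this
      have h2 : (0 : ℝ) < 2 ^ (j + 1) := by positivity
      linarith
    refine (H (j + 1)).roots.toFinset.finite_toSet.subset fun x hx => ?_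
    simpa [hne] using hx
  have hfin : {x | deriv f x = 0}.Finite := by
    simpa only [hdf] using hfin0
  obtain ⟨s, hs, hsmin⟩ := Set.exists_min_image _ (fun x => |f x|) hfin0 ⟨s0, hs0⟩
  have hfc : ∀ w, deriv f w = 0 → |f s| ≤ |f w| := fun w hw => hsmin w ((hdf w).1 hw)
  have hgc : ∀ w, deriv g w = 0 → |g w| < |f s| := by
    intro w hw
    simp only [f, g, abs_mul, abs_of_pos hcos, abs_of_pos hsin]
    exact hall s w hs ((hdg w).1 hw)
  have hmax : ∀ t, IsLocalMax f t → |f s| ≤ f t := by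
    intro t ht
    have h1 : IsLocalMax (fun x => (H (j + 2)).eval x) t := by
      filter_upwards [ht] with x hx
      exact le_of_mul_le_mul_left hx hcos
    have h2 : 0 < f t := mul_pos hcos (h_locmax j t h1)
    rw [← abs_of_pos h2]
    exact hfc t ht.deriv_eq_zero
  have hPhi : ∀ p, Phi (j + 2) θ p = (f p.1 + g p.2) * Real.exp (-(p.1 ^ 2 + p.2 ^ 2) / 2) := fun p => rfl
  have hPhi0 : ∀ p, Phi (j + 2) θ p = 0 ↔ f p.1 + g p.2 = 0 := by
    intro p
    rw [hPhi, mul_eq_zero]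
    simp [Real.exp_ne_zero]
  have hN : nodalSet (j + 2) θ = {p : ℝ × ℝ | f p.1 + g p.2 = 0} := by
    ext p; exact hPhi0 p
  have hconn : IsConnected (nodalSet (j + 2) θ) := by
    rw [hN]
    exact nodal_conn hf hft hfb hfin hfc hg hgt hgb hgc
  refine ⟨hconn.nonempty, hconn, ?_, ?_⟩
  · rintro ⟨x, y⟩ hp hD
    have hp0 : f x + g y = 0 := (hPhi0 (x, y)).1 hp
    have hfd : Differentiable ℝ f := fun u => (Polynomial.differentiableAt _).const_mul _
    have hgd : Differentiable ℝ g := fun u => (Polynomial.differentiableAt _).const_mul _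
    have hPd : DifferentiableAt ℝ (Phi (j + 2) θ) (x, y) := by
      have : Phi (j + 2) θ = fun p : ℝ × ℝ => (f p.1 + g p.2) * Real.exp (-(p.1 ^ 2 + p.2 ^ 2) / 2) := rfl
      rw [this]
      fun_prop
    have hF := hPd.hasFDerivAt
    rw [hD] at hF
    have hx : deriv f x = 0 := by
      have h1 : HasDerivAt (fun u => Phi (j + 2) θ (u, y)) 0 x := by
        have := hF.comp_hasDerivAt x ((hasDerivAt_id x).prodMk (hasDerivAt_const x y))
        rw [zero_apply] at this
        exact this
      have h2 : HasDerivAt (fun u => (f u + g y) * Real.exp (-(u ^ 2 + y ^ 2) / 2)) _ x :=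
        ((hfd x).hasDerivAt.add_const (g y)).mul
          (DifferentiableAt.hasDerivAt (f := fun u => Real.exp (-(u ^ 2 + y ^ 2) / 2)) (by fun_prop))
      have h3 := h1.unique h2
      rw [hp0, zero_mul, add_zero] at h3
      exact (mul_eq_zero.1 h3.symm).resolve_right (Real.exp_ne_zero _)
    have hy : deriv g y = 0 := by
      have h1 : HasDerivAt (fun u => Phi (j + 2) θ (x, u)) 0 y := by
        have := hF.comp_hasDerivAt y ((hasDerivAt_const y x).prodMk (hasDerivAt_id y))
        rw [zero_apply] at this
        exact this
      have h2 : HasDerivAt (fun u => (f x + g u) * Real.exp (-(x ^ 2 + u ^ 2) / 2)) _ y :=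
        ((hgd y).hasDerivAt.const_add (f x)).mul
          (DifferentiableAt.hasDerivAt (f := fun u => Real.exp (-(x ^ 2 + u ^ 2) / 2)) (by fun_prop))
      have h3 := h1.unique h2
      rw [hp0, zero_mul, add_zero] at h3
      exact (mul_eq_zero.1 h3.symm).resolve_right (Real.exp_ne_zero _)
    have h1 := hfc x hx
    have h2 := hgc y hy
    have h3 : f x = - g y := by linarith
    rw [h3, abs_neg] at h1
    linarith
  · have hP : IsConnected {p : ℝ × ℝ | 0 < f p.1 + g p.2} :=
      pos_conn hf hft hfb hmax hg hgt hgc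
    have hQ : IsConnected {p : ℝ × ℝ | f p.1 + g p.2 < 0} := by
      have := hP.image (fun p : ℝ × ℝ => -p) (by fun_prop)
      convert this using 1
      ext p
      simp only [image_neg_eq_neg, Set.mem_neg, mem_ofPred_eq, Prod.fst_neg, Prod.snd_neg, f, g, hodd]
      constructor <;> intro h <;> linarith
    have hPo : IsOpen {p : ℝ × ℝ | 0 < f p.1 + g p.2} := isOpen_lt (by fun_prop) (by fun_prop)
    have hQo : IsOpen {p : ℝ × ℝ | f p.1 + g p.2 < 0} := isOpen_lt (by fun_prop) (by fun_prop)
    have hU : {q : ℝ × ℝ | Phi (j + 2) θ q ≠ 0} =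
        {p : ℝ × ℝ | 0 < f p.1 + g p.2} ∪ {p : ℝ × ℝ | f p.1 + g p.2 < 0} := by
      ext p
      simp only [mem_ofPred_eq, mem_union, ne_eq, hPhi0]
      rw [← ne_eq, ne_iff_lt_or_gt, or_comm]
    have hdisj : Disjoint {p : ℝ × ℝ | 0 < f p.1 + g p.2} {p : ℝ × ℝ | f p.1 + g p.2 < 0} := by
      rw [Set.disjoint_left]
      intro p h1 h2
      rw [mem_ofPred_eq] at h1 h2
      exact lt_asymm h1 h2
    have cP : ∀ p ∈ {p : ℝ × ℝ | 0 < f p.1 + g p.2},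
        connectedComponentIn {q : ℝ × ℝ | Phi (j + 2) θ q ≠ 0} p = {p : ℝ × ℝ | 0 < f p.1 + g p.2} := by
      intro p hp
      rw [hU]
      apply Subset.antisymm
      · exact IsPreconnected.subset_left_of_subset_union hPo hQo hdisj
          (connectedComponentIn_subset _ _) ⟨p, mem_connectedComponentIn (Or.inl hp), hp⟩
          isPreconnected_connectedComponentIn
      · exact hP.isPreconnected.subset_connectedComponentIn hp subset_union_left
    have cQ : ∀ p ∈ {p : ℝ × ℝ | f p.1 + g p.2 < 0},
        connectedComponentIn {q : ℝ × ℝ | Phi (j + 2) θ q ≠ 0} p = {p : ℝ × ℝ | f p.1 + g p.2 < 0} := by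
      intro p hp
      rw [hU]
      apply Subset.antisymm
      · exact IsPreconnected.subset_right_of_subset_union hPo hQo hdisj
          (connectedComponentIn_subset _ _) ⟨p, mem_connectedComponentIn (Or.inr hp), hp⟩
          isPreconnected_connectedComponentIn
      · exact hQ.isPreconnected.subset_connectedComponentIn hp subset_union_right
    obtain ⟨p1, hp1⟩ := hP.nonempty
    obtain ⟨p2, hp2⟩ := hQ.nonempty
    have hne : {p : ℝ × ℝ | 0 < f p.1 + g p.2} ≠ {p : ℝ × ℝ | f p.1 + g p.2 < 0} := by
      intro h
      have h' := hp1
      rw [h] at h'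
      exact Set.disjoint_left.1 hdisj hp1 h'
    rw [numNodalDomains]
    refine Eq.trans ?_ (Set.ncard_pair hne)
    congr 1
    ext C
    simp only [mem_ofPred_eq, mem_insert_iff, mem_singleton_iff]
    constructor
    · rintro ⟨p, hp, rfl⟩
      have : p ∈ {q : ℝ × ℝ | Phi (j + 2) θ q ≠ 0} := hp
      rw [hU] at this
      rcases this with h | h
      · exact Or.inl (cP p h)
      · exact Or.inr (cQ p h)
    · rintro (rfl | rfl)
      · refine ⟨p1, ?_, (cP p1 hp1).symm⟩
        have : p1 ∈ {q : ℝ × ℝ | Phi (j + 2) θ q ≠ 0} := by rw [hU]; exact Or.inl hp1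
        exact this
      · refine ⟨p2, ?_, (cQ p2 hp2).symm⟩
        have : p2 ∈ {q : ℝ × ℝ | Phi (j + 2) θ q ≠ 0} := by rw [hU]; exact Or.inr hp2
        exact this

end Aux

open Real Set in
/-- **Proposition 5.1.** Let `n` be odd, let `t' 0 < t' 1 < ⋯` enumerate the `n-1`
zeros of `H_{n-1}`, and for `i, j` let `θij i j ∈ (0,π)` be the unique angle with
`cos(θij i j)·H_n(t' i) + sin(θij i j)·H_n(t' j) = 0`.  If `θc` is the least element of
`{θij i j}` then for every `0 < θ < θc` the nodal set `N(Φ^θ_n)` is a nonempty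
connected regular curve and `Φ^θ_n` has exactly two nodal domains. -/
theorem two_nodal_domains_below_theta_c (n : ℕ) (hodd : Odd n) (hpos : 0 < n)
    (t' : Fin (n - 1) → ℝ) (ht'mono : StrictMono t')
    (ht'zero : ∀ x : ℝ, (H (n - 1)).eval x = 0 ↔ ∃ i, x = t' i)
    (θij : Fin (n - 1) → Fin (n - 1) → ℝ)
    (hθmem : ∀ i j, θij i j ∈ Set.Ioo 0 π)
    (hθeq : ∀ i j,
      Real.cos (θij i j) * (H n).eval (t' i) + Real.sin (θij i j) * (H n).eval (t' j) = 0)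
    (θc : ℝ) (hθc : IsLeast {θ : ℝ | ∃ i j, θ = θij i j} θc)
    (θ : ℝ) (hθpos : 0 < θ) (hθlt : θ < θc) :
    (nodalSet n θ).Nonempty ∧
    IsConnected (nodalSet n θ) ∧
    (∀ p ∈ nodalSet n θ, fderiv ℝ (Phi n θ) p ≠ 0) ∧
    numNodalDomains n θ = 2 := by
  
  obtain ⟨i0, j0, hij0⟩ := hθc.1
  have hn2 : ∃ j, n = j + 2 := ⟨n - 2, by have := i0.2; omega⟩
  obtain ⟨j, rfl⟩ := hn2
  have hθπ : θ < π := by rw [hij0] at hθlt; exact hθlt.trans (hθmem i0 j0).2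
  have hsin : 0 < Real.sin θ := Real.sin_pos_of_pos_of_lt_pi hθpos hθπ
  have hzero : ∀ x : ℝ, (H (j + 1)).eval x = 0 ↔ ∃ i, x = t' i := ht'zero
  have hneg : ∀ x, (H (j + 2)).eval (-x) = - (H (j + 2)).eval x := by
    intro x
    rw [(H_neg (j + 2) x).1, hodd.neg_one_pow]; ring
  have hne : ∀ i, (H (j + 2)).eval (t' i) ≠ 0 := fun i h =>
    H_common (j + 1) (t' i) ((hzero _).2 ⟨i, rfl⟩) h
  have opp : ∀ i k, (H (j + 2)).eval (t' i) * (H (j + 2)).eval (t' k) < 0 →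
      Real.sin θ * |(H (j + 2)).eval (t' k)| < Real.cos θ * |(H (j + 2)).eval (t' i)| := by
    intro i k hik
    have h1 := hθeq i k
    obtain ⟨h2, h3⟩ := hθmem i k
    have h4 : θ < θij i k := hθlt.trans_le (hθc.2 ⟨i, k, rfl⟩)
    have h5 : 0 < Real.sin (θij i k - θ) := Real.sin_pos_of_pos_of_lt_pi (by linarith) (by linarith)
    rw [Real.sin_sub] at h5
    have h6 : 0 < Real.sin (θij i k) := Real.sin_pos_of_pos_of_lt_pi h2 h3
    have h7 : Real.cos (θij i k) * |(H (j + 2)).eval (t' i)| =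
        Real.sin (θij i k) * |(H (j + 2)).eval (t' k)| := by
      rcases mul_neg_iff.1 hik with ⟨ha, hb⟩ | ⟨ha, hb⟩
      · rw [abs_of_pos ha, abs_of_neg hb]; linarith
      · rw [abs_of_neg ha, abs_of_pos hb]; linarith
    have h8 : 0 < |(H (j + 2)).eval (t' i)| := abs_pos.2 (hne i)
    have h9 := mul_pos h5 h8
    have h10 : Real.sin (θij i k) * (Real.sin θ * |(H (j + 2)).eval (t' k)|) <
        Real.sin (θij i k) * (Real.cos θ * |(H (j + 2)).eval (t' i)|) := by
      have : Real.sin (θij i k) * (Real.sin θ * |(H (j + 2)).eval (t' k)|) =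
        Real.sin θ * (Real.cos (θij i k) * |(H (j + 2)).eval (t' i)|) := by rw [h7]; ring
      rw [this]; linarith
    exact lt_of_mul_lt_mul_left h10 h6.le
  have all : ∀ i k, Real.sin θ * |(H (j + 2)).eval (t' k)| < Real.cos θ * |(H (j + 2)).eval (t' i)| := by
    intro i k
    rcases lt_or_ge ((H (j + 2)).eval (t' i) * (H (j + 2)).eval (t' k)) 0 with h | h
    · exact opp i k h
    · obtain ⟨i', hi'⟩ := (hzero (-t' i)).1 (by
        rw [(H_neg (j + 1) (t' i)).1, (hzero (t' i)).2 ⟨i, rfl⟩, mul_zero])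
      have h' : 0 < (H (j + 2)).eval (t' i) * (H (j + 2)).eval (t' k) :=
        lt_of_le_of_ne h (mul_ne_zero (hne i) (hne k)).symm
      have := opp i' k (by rw [← hi', hneg]; linarith)
      rwa [← hi', hneg, abs_neg] at this
  refine core j θ hsin hneg ⟨t' i0, (hzero _).2 ⟨i0, rfl⟩⟩ ?_
  intro s t hs ht
  obtain ⟨i, rfl⟩ := (hzero s).1 hs
  obtain ⟨k, rfl⟩ := (hzero t).1 ht
  exact all i k
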